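/- arXiv:2309.12949 — 2 statements merged into one kernel-verified Lean document; each statement's English description precedes it below -/
import Mathlib

section
/- (Proposition 4, exact clustering.) Let ℬ : {1,…,n} → {1,…,r} be a block structure with r blocks of equal size d ≥ 2 (n = r·d), with indicator matrix B ∈ ℝ^{n×n}. Let B̃ ∈ ℝ^{n×n} be any symmetric matrix with ‖B̃ − B‖₂ < √(2d)/8, and let Ũ ∈ ℝ^{n×r} be a matrix whose columns form an orthonormal family of eigenvectors of B̃ associated with its r largest eigenvalues (counted with multiplicity). Then the greedy K-means procedure with threshold 1/√(2d) applied to the rows ũ_1,…,ũ_n of Ũ outputs a labeling ℬ̂ : {1,…,n} → ℕ that induces exactly the same partition of {1,…,n} as ℬ (i.e. ℬ̂(i) = ℬ̂(j) if and only if ℬ(i) = ℬ(j)). -/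
/-!
Since all blocks have size `d`, the indicator matrix is `B = d • P_F` for an orthogonal projection
`P_F` of rank `r`. Let `P_V` be the projection onto the span of the top eigenvectors of `B̃` and
`ε = ‖B̃ - B‖`. By Courant-Fischer the top eigenvalues of `B̃` are at least `d - ε`, while `B̃`
coincides with `B̃ - B` on `Fᗮ`; hence `‖P_V w‖ ≤ ε / (d - ε) * ‖w‖` for `w ∈ Fᗮ`, and equality of
dimensions upgrades this to `‖P_V - P_F‖ ≤ ε / (d - ε)` (Davis-Kahan).

The distance between the rows `i` and `j` of `Ũ` is `‖P_V (e_i - e_j)‖`, so it differs by at most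
`δ = √2 * ε / (d - ε)` from `‖P_F (e_i - e_j)‖`, which is `0` inside a block and `√(2 / d)` across
blocks. If `δ < t ≤ √(2 / d) - 2 * δ`, then, as balls are convex, each centroid of a cluster
contained in a block is within `δ` of the rows of that block and at distance at least `t` from all
others, so no greedy step makes a mistake.
-/

open Matrix

/-- The spectral norm (largest singular value) of a real matrix, as the operator norm of
the induced map between Euclidean spaces. -/
noncomputable def specNorm {m n : ℕ} (A : Matrix (Fin m) (Fin n) ℝ) : ℝ :=
  ‖(Matrix.toEuclideanLin.trans LinearMap.toContinuousLinearMap) A‖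

/-- Euclidean distance between two vectors of `ℝ^r`. -/
noncomputable def eDist {r : ℕ} (v w : Fin r → ℝ) : ℝ :=
  Real.sqrt (∑ k, (v k - w k) ^ 2)

/-- The labels produced by the first `j` steps of the greedy K-means procedure with
threshold `t` on the stream of points `u 0, u 1, …` in `ℝ^r`.  `greedyKMeans r u t j`
is the list of labels (natural numbers, created in order `0, 1, 2, …`) assigned to the
points `u 0, …, u (j-1)`.  At each step, the centroid of a cluster is the mean of the
points assigned to it so far; the new point is assigned to the cluster of its nearest
centroid if that distance is `< t`, and otherwise starts a new cluster. -/
noncomputable def greedyKMeans (r : ℕ) (u : ℕ → Fin r → ℝ) (t : ℝ) : ℕ → List ℕ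
  | 0 => []
  | j + 1 =>
    let prev := greedyKMeans r u t j
    -- number of clusters created so far
    let K := prev.foldr (fun a b => max (a + 1) b) 0
    -- current centroid of cluster `q`: the mean of the points assigned to it so far
    let ctr : ℕ → Fin r → ℝ := fun q =>
      let idxs := (List.range j).filter fun i => prev.getD i 0 = q
      ((idxs.length : ℝ))⁻¹ • (idxs.map u).sum
    let lab : ℕ :=
      match (List.range K).argmin fun q => eDist (u j) (ctr q) with
      | none => K
      | some best => if eDist (u j) (ctr best) < t then best else K
    prev ++ [lab]

section Spectral

open Module Submodule RCLike InnerProductSpace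

variable {𝕜 H ι : Type*} [RCLike 𝕜] [NormedAddCommGroup H] [InnerProductSpace 𝕜 H]

lemma mem_orthogonal_span_iff {s : Set H} {x : H} :
    x ∈ (span 𝕜 s)ᗮ ↔ ∀ v ∈ s, inner 𝕜 v x = 0 := by
  rw [← span_singleton_le_iff_mem, ← isOrtho_iff_le, isOrtho_comm, isOrtho_span]
  simp

/-- `u` is an orthonormal family of eigenvectors of `T`, with eigenvalues `lam`, that exhausts the
largest eigenvalues counted with multiplicity: every eigenvalue left over on the orthogonal
complement of the family is at most each `lam q`. -/
structure IsTopEigenfamily (T : H →L[𝕜] H) (u : ι → H) (lam : ι → ℝ) : Prop where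
  orthonormal : Orthonormal 𝕜 u
  apply_eq_smul : ∀ q, T (u q) = (lam q : 𝕜) • u q
  eigenvalue_le : ∀ (a : ℝ) (v : H), v ≠ 0 → T v = (a : 𝕜) • v →
    (∀ q, inner 𝕜 (u q) v = 0) → ∀ q, a ≤ lam q

lemma re_inner_map_self_le_of_eigenvalue_le [FiniteDimensional 𝕜 H] {T : H →ₗ[𝕜] H}
    (hT : T.IsSymmetric) {c : ℝ} (hc : ∀ (a : ℝ) v, v ≠ 0 → T v = (a : 𝕜) • v → a ≤ c) (x : H) :
    re (inner 𝕜 (T x) x) ≤ c * ‖x‖ ^ 2 := by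
  set b := hT.eigenvectorBasis rfl
  have hev (i) : hT.eigenvalues rfl i ≤ c :=
    hc _ (b i) (b.orthonormal.ne_zero i) (hT.apply_eigenvectorBasis rfl i)
  calc re (inner 𝕜 (T x) x) = ∑ i, hT.eigenvalues rfl i * ‖b.repr x i‖ ^ 2 := by
        rw [← b.repr.inner_map_map, PiLp.inner_apply, map_sum]
        refine Finset.sum_congr rfl fun i _ => ?_
        rw [hT.eigenvectorBasis_apply_self_apply, ← smul_eq_mul, inner_smul_left, conj_ofReal,
          re_ofReal_mul, inner_self_eq_norm_sq]
    _ ≤ ∑ i, c * ‖b.repr x i‖ ^ 2 := by gcongr with i; exact hev i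
    _ = c * ‖x‖ ^ 2 := by
        rw [← Finset.mul_sum, ← EuclideanSpace.norm_sq_eq, b.repr.norm_map]

lemma re_inner_map_self_le_of_eigenvalue_le_of_mem [FiniteDimensional 𝕜 H] {T : H →ₗ[𝕜] H}
    (hT : T.IsSymmetric) {W : Submodule 𝕜 H} (hW : W ∈ End.invtSubmodule T) {c : ℝ}
    (hc : ∀ (a : ℝ), ∀ v ∈ W, v ≠ 0 → T v = (a : 𝕜) • v → a ≤ c) {x : H} (hx : x ∈ W) :
    re (inner 𝕜 (T x) x) ≤ c * ‖x‖ ^ 2 :=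
  re_inner_map_self_le_of_eigenvalue_le (hT.restrict_invariant hW)
    (fun a v hv hav => hc a v v.2 (by simpa using hv) (congrArg Subtype.val hav)) ⟨x, hx⟩

lemma exists_mem_orthogonal_ne_zero_of_finrank_lt [FiniteDimensional 𝕜 H] {F G : Submodule 𝕜 H}
    (h : finrank 𝕜 G < finrank 𝕜 F) : ∃ x ∈ F, x ∈ Gᗮ ∧ x ≠ 0 := by
  by_contra! hne
  have hdisj : Disjoint F Gᗮ := disjoint_def.2 hne
  have := finrank_add_finrank_le_of_disjoint hdisj
  have := G.finrank_add_finrank_orthogonal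
  omega

namespace IsTopEigenfamily

variable {T : H →L[𝕜] H} {u : ι → H} {lam : ι → ℝ}

lemma re_inner_map_self_le [FiniteDimensional 𝕜 H] (hu : IsTopEigenfamily T u lam)
    (hT : T.IsSymmetric) (q : ι) {x : H} (hx : x ∈ (span 𝕜 (u '' {q}ᶜ))ᗮ) :
    re (inner 𝕜 (T x) x) ≤ lam q * ‖x‖ ^ 2 := by
  have hinv : span 𝕜 (u '' {q}ᶜ) ∈ End.invtSubmodule (T : H →ₗ[𝕜] H) := by
    rw [End.mem_invtSubmodule, span_le]
    rintro _ ⟨p, hp, rfl⟩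
    simpa [hu.apply_eq_smul p] using smul_mem _ _ (subset_span (Set.mem_image_of_mem u hp))
  refine re_inner_map_self_le_of_eigenvalue_le_of_mem hT
    (hT.orthogonalComplement_mem_invtSubmodule hinv) (fun a v hv hv0 hav => ?_) hx
  rw [mem_orthogonal_span_iff, Set.forall_mem_image] at hv
  by_cases hqv : inner 𝕜 (u q) v = 0
  · refine hu.eigenvalue_le a v hv0 hav (fun p => ?_) q
    rcases eq_or_ne p q with rfl | hp
    exacts [hqv, hv hp]
  · have h := hT (u q) v
    simp only [ContinuousLinearMap.coe_coe] at h hav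
    rw [hu.apply_eq_smul, hav, inner_smul_left, inner_smul_right, conj_ofReal] at h
    exact (ofReal_injective (mul_right_cancel₀ hqv h)).ge

-- One half of the Courant-Fischer min-max principle.
lemma le_eigenvalue [FiniteDimensional 𝕜 H] [Fintype ι] (hu : IsTopEigenfamily T u lam)
    (hT : T.IsSymmetric) {F : Submodule 𝕜 H} (hF : Fintype.card ι ≤ finrank 𝕜 F) {a : ℝ}
    (ha : ∀ x ∈ F, a * ‖x‖ ^ 2 ≤ re (inner 𝕜 (T x) x)) (q : ι) : a ≤ lam q := by
  classical
  have hcard : finrank 𝕜 (span 𝕜 (u '' {q}ᶜ)) < finrank 𝕜 F := by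
    have himage : u '' {q}ᶜ = ↑(({q}ᶜ : Finset ι).image u) := by simp
    calc finrank 𝕜 (span 𝕜 (u '' {q}ᶜ)) ≤ (({q}ᶜ : Finset ι).image u).card :=
          himage ▸ finrank_span_finset_le_card _
      _ ≤ ({q}ᶜ : Finset ι).card := Finset.card_image_le
      _ < Fintype.card ι := Finset.card_lt_univ_of_notMem (x := q) (by simp)
      _ ≤ finrank 𝕜 F := hF
  obtain ⟨x, hxF, hxu, hx0⟩ := exists_mem_orthogonal_ne_zero_of_finrank_lt hcard
  exact le_of_mul_le_mul_right ((ha x hxF).trans (hu.re_inner_map_self_le hT q hxu))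
    (by positivity)

end IsTopEigenfamily

lemma norm_starProjection_span_sq [Fintype ι] {u : ι → H} (hu : Orthonormal 𝕜 u)
    [(span 𝕜 (Set.range u)).HasOrthogonalProjection] (x : H) :
    ‖(span 𝕜 (Set.range u)).starProjection x‖ ^ 2 = ∑ q, ‖inner 𝕜 (u q) x‖ ^ 2 := by
  classical
  have hsum : (span 𝕜 (Set.range u)).starProjection x = ∑ q, inner 𝕜 (u q) x • u q := by
    apply eq_starProjection_of_mem_orthogonal
    · exact sum_mem fun q _ => smul_mem _ _ (subset_span ⟨q, rfl⟩)
    · rw [mem_orthogonal_span_iff, Set.forall_mem_range]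
      intro q
      rw [inner_sub_right, hu.inner_right_fintype, sub_self]
  rw [@norm_sq_eq_re_inner 𝕜, hsum, hu.inner_sum, map_sum]
  exact Finset.sum_congr rfl fun q _ => by rw [RCLike.conj_mul, ← ofReal_pow, ofReal_re]

lemma mul_norm_starProjection_span_le [Finite ι] {T : H →L[𝕜] H} (hT : T.IsSymmetric)
    {u : ι → H} (hu : Orthonormal 𝕜 u) [(span 𝕜 (Set.range u)).HasOrthogonalProjection]
    {lam : ι → ℝ} (hlam : ∀ q, T (u q) = (lam q : 𝕜) • u q) {g : ℝ} (hg : 0 ≤ g)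
    (hle : ∀ q, g ≤ lam q) (x : H) : g * ‖(span 𝕜 (Set.range u)).starProjection x‖ ≤ ‖T x‖ := by
  have := Fintype.ofFinite ι
  refine le_of_sq_le_sq ?_ (norm_nonneg _)
  have hinner (q) : ‖inner 𝕜 (u q) (T x)‖ = |lam q| * ‖inner 𝕜 (u q) x‖ := by
    have h : inner 𝕜 (T (u q)) x = inner 𝕜 (u q) (T x) := hT (u q) x
    rw [← h, hlam, inner_smul_left, norm_mul, norm_conj, norm_ofReal]
  calc (g * ‖(span 𝕜 (Set.range u)).starProjection x‖) ^ 2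
      = ∑ q, (g * ‖inner 𝕜 (u q) x‖) ^ 2 := by
        simp only [mul_pow, norm_starProjection_span_sq hu, Finset.mul_sum]
    _ ≤ ∑ q, ‖inner 𝕜 (u q) (T x)‖ ^ 2 := by
        gcongr with q
        rw [hinner]
        gcongr
        exact (hle q).trans (le_abs_self _)
    _ ≤ ‖T x‖ ^ 2 := hu.sum_inner_products_le _

lemma trace_starProjection [FiniteDimensional 𝕜 H] (F : Submodule 𝕜 H) :
    LinearMap.trace 𝕜 H F.starProjection = finrank 𝕜 F :=
  LinearMap.IsProj.trace (f := (F.starProjection : H →ₗ[𝕜] H))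
    ⟨starProjection_apply_mem F, fun _ => starProjection_eq_self_iff.2⟩

section EqualDimension

variable [FiniteDimensional 𝕜 H] {V F : Submodule 𝕜 H}

lemma exists_mem_starProjection_eq (hVF : finrank 𝕜 V = finrank 𝕜 F)
    (hinj : Disjoint V Fᗮ) {y : H} (hy : y ∈ F) : ∃ x ∈ V, F.starProjection x = y := by
  set L : V →ₗ[𝕜] F := (F.orthogonalProjectionOnto : H →ₗ[𝕜] F) ∘ₗ V.subtype
  have hL : Function.Injective L := by
    rw [← LinearMap.ker_eq_bot, LinearMap.ker_eq_bot']
    intro x hx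
    have : (x : H) ∈ Fᗮ := orthogonalProjectionOnto_eq_zero_iff.1 hx
    simpa using disjoint_def.1 hinj x x.2 this
  obtain ⟨x, hx⟩ := (LinearMap.injective_iff_surjective_of_finrank_eq_finrank hVF).1 hL ⟨y, hy⟩
  exact ⟨x, x.2, congrArg Subtype.val hx⟩

-- The restricted projections `V → F` and `F → V` are mutually adjoint maps between spaces of equal
-- dimension, so they have the same smallest singular value.
lemma mul_norm_sq_le_norm_sq_starProjection (hVF : finrank 𝕜 V = finrank 𝕜 F) {c : ℝ} (hc : 0 < c)
    (h : ∀ x ∈ V, c * ‖x‖ ^ 2 ≤ ‖F.starProjection x‖ ^ 2) {y : H} (hy : y ∈ F) :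
    c * ‖y‖ ^ 2 ≤ ‖V.starProjection y‖ ^ 2 := by
  have hdisj : Disjoint V Fᗮ := disjoint_def.2 fun x hxV hxF => by
    have hx := h x hxV
    rw [(starProjection_apply_eq_zero_iff F).2 hxF, norm_zero] at hx
    by_contra hx0
    have : 0 < c * ‖x‖ ^ 2 := by positivity
    linarith
  obtain ⟨x, hxV, hxy⟩ := exists_mem_starProjection_eq hVF hdisj hy
  have hyy : ‖y‖ ^ 2 ≤ ‖V.starProjection y‖ * ‖x‖ := by
    calc ‖y‖ ^ 2 = re (inner 𝕜 y (F.starProjection x)) := by rw [hxy, inner_self_eq_norm_sq]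
      _ = re (inner 𝕜 y x) := by
        rw [← inner_starProjection_left_eq_right F, starProjection_eq_self_iff.2 hy]
      _ = re (inner 𝕜 (V.starProjection y) x) := by
        rw [inner_starProjection_left_eq_right V, starProjection_eq_self_iff.2 hxV]
      _ ≤ ‖V.starProjection y‖ * ‖x‖ := re_inner_le_norm _ _
  rcases eq_or_ne y 0 with rfl | hy0
  · simp
  refine le_of_mul_le_mul_right ?_ (show 0 < ‖y‖ ^ 2 by positivity)
  calc c * ‖y‖ ^ 2 * ‖y‖ ^ 2 ≤ c * (‖V.starProjection y‖ * ‖x‖) ^ 2 := by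
        rw [mul_assoc, ← sq]; gcongr
    _ = ‖V.starProjection y‖ ^ 2 * (c * ‖x‖ ^ 2) := by ring
    _ ≤ ‖V.starProjection y‖ ^ 2 * ‖y‖ ^ 2 := by gcongr; exact hxy ▸ h x hxV

lemma norm_starProjection_orthogonal_le_of_mem {s : ℝ} (hs : 0 ≤ s)
    (h : ∀ w ∈ Fᗮ, ‖V.starProjection w‖ ≤ s * ‖w‖) {x : H} (hx : x ∈ V) :
    ‖Fᗮ.starProjection x‖ ≤ s * ‖x‖ := by
  obtain ⟨w, hw⟩ : ∃ w, Fᗮ.starProjection x = w := ⟨_, rfl⟩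
  have hwF : w ∈ Fᗮ := hw ▸ starProjection_apply_mem _ _
  rw [hw]
  rcases eq_or_ne w 0 with rfl | hw0
  · rw [norm_zero]
    positivity
  refine le_of_mul_le_mul_right ?_ (norm_pos_iff.2 hw0)
  calc ‖w‖ * ‖w‖ = re (inner 𝕜 (Fᗮ.starProjection x) w) := by rw [hw, inner_self_eq_norm_mul_norm]
    _ = re (inner 𝕜 x w) := by
      rw [inner_starProjection_left_eq_right Fᗮ, starProjection_eq_self_iff.2 hwF]
    _ = re (inner 𝕜 x (V.starProjection w)) := by
      rw [← inner_starProjection_left_eq_right V, starProjection_eq_self_iff.2 hx]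
    _ ≤ ‖x‖ * ‖V.starProjection w‖ := re_inner_le_norm _ _
    _ ≤ ‖x‖ * (s * ‖w‖) := by gcongr; exact h w hwF
    _ = s * ‖x‖ * ‖w‖ := by ring

lemma norm_starProjection_sub_starProjection_le (hVF : finrank 𝕜 V = finrank 𝕜 F) {s : ℝ}
    (hs0 : 0 ≤ s) (hs1 : s < 1) (h : ∀ w ∈ Fᗮ, ‖V.starProjection w‖ ≤ s * ‖w‖) :
    ‖V.starProjection - F.starProjection‖ ≤ s := by
  have hVle {x : H} (hx : x ∈ V) : (1 - s ^ 2) * ‖x‖ ^ 2 ≤ ‖F.starProjection x‖ ^ 2 := by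
    have := pow_le_pow_left₀ (norm_nonneg _) (norm_starProjection_orthogonal_le_of_mem hs0 h hx) 2
    linarith [norm_sq_eq_add_norm_sq_starProjection x F]
  have hFle {y : H} (hy : y ∈ F) : ‖Vᗮ.starProjection y‖ ^ 2 ≤ s ^ 2 * ‖y‖ ^ 2 := by
    have := mul_norm_sq_le_norm_sq_starProjection hVF (by nlinarith) (fun x hx => hVle hx) hy
    linarith [norm_sq_eq_add_norm_sq_starProjection y V]
  refine ContinuousLinearMap.opNorm_le_bound _ hs0 fun x => ?_
  obtain ⟨y, hy⟩ : ∃ y, F.starProjection x = y := ⟨_, rfl⟩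
  obtain ⟨w, hw⟩ : ∃ w, Fᗮ.starProjection x = w := ⟨_, rfl⟩
  have hyF : y ∈ F := hy ▸ starProjection_apply_mem _ _
  have hwF : w ∈ Fᗮ := hw ▸ starProjection_apply_mem _ _
  have hV : V.starProjection (V.starProjection x - y) = V.starProjection w := by
    rw [map_sub, starProjection_eq_self_iff.2 (starProjection_apply_mem V x), ← map_sub, ← hw,
      starProjection_orthogonal_val, hy]
  have hVperp : Vᗮ.starProjection (V.starProjection x - y) = -Vᗮ.starProjection y := by
    have hx : V.starProjection x ∈ Vᗮᗮ := le_orthogonal_orthogonal V (starProjection_apply_mem V x)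
    rw [map_sub, (starProjection_apply_eq_zero_iff Vᗮ).2 hx, zero_sub]
  refine le_of_sq_le_sq ?_ (by positivity)
  calc ‖(V.starProjection - F.starProjection) x‖ ^ 2
      = ‖V.starProjection w‖ ^ 2 + ‖Vᗮ.starProjection y‖ ^ 2 := by
        rw [_root_.sub_apply, hy, norm_sq_eq_add_norm_sq_starProjection _ V, hV,
          hVperp, norm_neg]
    _ ≤ (s * ‖w‖) ^ 2 + s ^ 2 * ‖y‖ ^ 2 := by
        gcongr
        exacts [h w hwF, hFle hyF]
    _ = (s * ‖x‖) ^ 2 := by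
        rw [mul_pow s ‖x‖, norm_sq_eq_add_norm_sq_starProjection x F, hy, hw]
        ring

end EqualDimension

-- The Davis-Kahan theorem, for a perturbation of a multiple of a projection.
theorem IsTopEigenfamily.norm_starProjection_sub_le [FiniteDimensional 𝕜 H] [Fintype ι]
    {T : H →L[𝕜] H} (hT : T.IsSymmetric) {u : ι → H} {lam : ι → ℝ} (hu : IsTopEigenfamily T u lam)
    {F : Submodule 𝕜 H} (hF : finrank 𝕜 F = Fintype.card ι) {d : ℝ}
    (hd : 2 * ‖T - (d : 𝕜) • F.starProjection‖ < d) :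
    ‖(span 𝕜 (Set.range u)).starProjection - F.starProjection‖ ≤
      ‖T - (d : 𝕜) • F.starProjection‖ / (d - ‖T - (d : 𝕜) • F.starProjection‖) := by
  obtain ⟨E, hE⟩ : ∃ E, T - (d : 𝕜) • F.starProjection = E := ⟨_, rfl⟩
  rw [hE] at hd ⊢
  have hgap : 0 < d - ‖E‖ := by linarith [norm_nonneg E]
  have hTF {x : H} (hx : x ∈ F) : (d - ‖E‖) * ‖x‖ ^ 2 ≤ re (inner 𝕜 (T x) x) := by
    have hTx : T x = (d : 𝕜) • x + E x := by
      rw [← hE]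
      simp [starProjection_eq_self_iff.2 hx]
    have hEx : -(‖E‖ * ‖x‖ * ‖x‖) ≤ re (inner 𝕜 (E x) x) :=
      neg_le_of_abs_le <| (abs_re_le_norm _).trans <| (norm_inner_le_norm _ _).trans <| by
        gcongr
        exact E.le_opNorm x
    rw [hTx, inner_add_left, map_add, inner_smul_left, conj_ofReal, re_ofReal_mul,
      inner_self_eq_norm_sq]
    linarith
  refine norm_starProjection_sub_starProjection_le ?_ (by positivity)
    ((div_lt_one hgap).2 (by linarith)) fun w hw => ?_
  · rw [hF, finrank_span_eq_card hu.orthonormal.linearIndependent]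
  rw [div_mul_eq_mul_div, le_div_iff₀' hgap]
  have hTw : T w = E w := by
    rw [← hE]
    simp [(starProjection_apply_eq_zero_iff F).2 hw]
  calc (d - ‖E‖) * ‖(span 𝕜 (Set.range u)).starProjection w‖ ≤ ‖T w‖ :=
        mul_norm_starProjection_span_le hT hu.orthonormal hu.apply_eq_smul hgap.le
          (hu.le_eigenvalue hT hF.ge fun x hx => hTF hx) w
    _ ≤ ‖E‖ * ‖w‖ := hTw ▸ E.le_opNorm w

end Spectral

section BlockIndicator

open Module Submodule

/-- The indicator matrix of the block structure `ℬ`: its `(i, j)` entry is `1` if `i` and `j` lie in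
the same block and `0` otherwise. -/
def blockIndicator {m κ : Type*} [DecidableEq κ] (ℬ : m → κ) : Matrix m m ℝ :=
  Matrix.of fun i j => if ℬ i = ℬ j then 1 else 0

variable {m κ : Type*} [Fintype m] [DecidableEq κ] {ℬ : m → κ} {d : ℕ}

lemma blockIndicator_mul_self (hfib : ∀ q, (Finset.univ.filter fun i => ℬ i = q).card = d) :
    blockIndicator ℬ * blockIndicator ℬ = (d : ℝ) • blockIndicator ℬ := by
  ext i j
  have hterm (k : m) : blockIndicator ℬ i k * blockIndicator ℬ k j =
      if ℬ k = ℬ i then blockIndicator ℬ i j else 0 := by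
    by_cases h : ℬ k = ℬ i <;> simp [blockIndicator, h, eq_comm (a := ℬ i)]
  simp only [mul_apply, hterm, ← Finset.sum_filter, Finset.sum_const, hfib, Matrix.smul_apply,
    nsmul_eq_mul, smul_eq_mul]

lemma isStarProjection_inv_smul_blockIndicator (hd : d ≠ 0)
    (hfib : ∀ q, (Finset.univ.filter fun i => ℬ i = q).card = d) :
    IsStarProjection ((d : ℝ)⁻¹ • blockIndicator ℬ) where
  isIdempotentElem := by
    have : (d : ℝ) ≠ 0 := by exact_mod_cast hd
    rw [IsIdempotentElem, smul_mul_smul_comm, blockIndicator_mul_self hfib, smul_smul,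
      inv_mul_cancel_right₀ this]
  isSelfAdjoint := by
    refine IsSelfAdjoint.smul (.all _) ?_
    ext i j
    simp [blockIndicator, eq_comm]

lemma trace_toEuclideanCLM [DecidableEq m] (A : Matrix m m ℝ) :
    LinearMap.trace ℝ _ (toEuclideanCLM (𝕜 := ℝ) A : EuclideanSpace ℝ m →ₗ[ℝ] _) = A.trace :=
  A.trace_toLin_eq (EuclideanSpace.basisFun m ℝ).toBasis

lemma exists_toEuclideanCLM_blockIndicator_eq [DecidableEq m] [Fintype κ] (hd : d ≠ 0)
    (hfib : ∀ q, (Finset.univ.filter fun i => ℬ i = q).card = d) :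
    ∃ F : Submodule ℝ (EuclideanSpace ℝ m), finrank ℝ F = Fintype.card κ ∧
      toEuclideanCLM (𝕜 := ℝ) (blockIndicator ℬ) = (d : ℝ) • F.starProjection := by
  have hd' : (d : ℝ) ≠ 0 := by exact_mod_cast hd
  obtain ⟨F, _, hF⟩ := isStarProjection_iff_eq_starProjection.1 <|
    (isStarProjection_inv_smul_blockIndicator hd hfib).map (toEuclideanCLM (𝕜 := ℝ))
  refine ⟨F, ?_, by rw [← hF, map_smul, smul_inv_smul₀ hd']⟩
  have hcard : Fintype.card m = Fintype.card κ * d := by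
    have := Finset.card_eq_sum_card_fiberwise (f := ℬ) (s := .univ) (t := .univ) (by simp)
    simpa [hfib] using this
  have htrace : (finrank ℝ F : ℝ) = (d : ℝ)⁻¹ * Fintype.card m := by
    rw [← trace_starProjection F, ← hF, trace_toEuclideanCLM, trace_smul]
    simp [trace, blockIndicator]
  rw [hcard] at htrace
  push_cast at htrace
  field_simp at htrace
  exact_mod_cast htrace

lemma norm_starProjection_single_sub_single_sq [DecidableEq m] (hd : d ≠ 0)
    {F : Submodule ℝ (EuclideanSpace ℝ m)}
    (hF : toEuclideanCLM (𝕜 := ℝ) (blockIndicator ℬ) = (d : ℝ) • F.starProjection) (i j : m) :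
    ‖F.starProjection (EuclideanSpace.single i 1 - EuclideanSpace.single j 1)‖ ^ 2 =
      if ℬ i = ℬ j then 0 else 2 / (d : ℝ) := by
  have hd' : (d : ℝ) ≠ 0 := by exact_mod_cast hd
  set e : EuclideanSpace ℝ m := EuclideanSpace.single i 1 - EuclideanSpace.single j 1
  have hnorm : d * ‖F.starProjection e‖ ^ 2 = if ℬ i = ℬ j then 0 else (2 : ℝ) := by
    calc d * ‖F.starProjection e‖ ^ 2
        = inner ℝ e (toEuclideanCLM (𝕜 := ℝ) (blockIndicator ℬ) e) := by
          rw [hF, _root_.smul_apply, inner_smul_right, real_inner_comm]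
          congr 1
          exact (re_inner_starProjection_eq_normSq F e).symm
      _ = if ℬ i = ℬ j then 0 else (2 : ℝ) := by
          rw [inner_toEuclideanCLM]
          simp only [e, WithLp.ofLp_sub, PiLp.ofLp_single, blockIndicator, mulVec_sub,
            mulVec_single, MulOpposite.op_one, one_smul, dotProduct_sub, sub_dotProduct,
            single_dotProduct, col_apply, of_apply, eq_comm (a := ℬ j), if_true, one_mul]
          split_ifs <;> norm_num
  rw [← mul_right_inj' hd', hnorm, mul_ite, mul_zero, mul_div_cancel₀ _ hd']

end BlockIndicator

section Rows

open Submodule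

lemma specNorm_eq_norm_toEuclideanCLM {n : ℕ} (A : Matrix (Fin n) (Fin n) ℝ) :
    specNorm A = ‖toEuclideanCLM (𝕜 := ℝ) A‖ := rfl

lemma eDist_eq_norm {r : ℕ} (v w : Fin r → ℝ) :
    eDist v w = ‖(WithLp.toLp 2 v : EuclideanSpace ℝ (Fin r)) - WithLp.toLp 2 w‖ := by
  rw [eDist, EuclideanSpace.norm_eq]
  simp only [WithLp.ofLp_sub, Pi.sub_apply, Real.norm_eq_abs, sq_abs]

lemma norm_single_sub_single_le {m : Type*} [Fintype m] [DecidableEq m] (i j : m) :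
    ‖(EuclideanSpace.single i 1 - EuclideanSpace.single j 1 : EuclideanSpace ℝ m)‖ ≤ √2 := by
  refine Real.le_sqrt_of_sq_le ?_
  rw [norm_sub_sq_real, EuclideanSpace.inner_single_left]
  by_cases h : i = j <;> simp [h] <;> norm_num

lemma eDist_row_eq_norm_starProjection {m : Type*} [Fintype m] [DecidableEq m] {r : ℕ}
    {U : Matrix m (Fin r) ℝ}
    (hU : Orthonormal ℝ fun q => (WithLp.toLp 2 (U.col q) : EuclideanSpace ℝ m)) (i j : m) :
    eDist (U i) (U j) = ‖(span ℝ (Set.range fun q =>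
      (WithLp.toLp 2 (U.col q) : EuclideanSpace ℝ m))).starProjection
        (EuclideanSpace.single i 1 - EuclideanSpace.single j 1)‖ := by
  rw [eDist, ← Real.sqrt_sq (norm_nonneg (starProjection _ _)), norm_starProjection_span_sq hU]
  congr 1
  refine Finset.sum_congr rfl fun q _ => ?_
  simp [inner_sub_right, EuclideanSpace.inner_single_right]

lemma isTopEigenfamily_col {m κ : Type*} [Fintype m] [DecidableEq m] [DecidableEq κ]
    {A : Matrix m m ℝ} {U : Matrix m κ ℝ} {lam : κ → ℝ}
    (horth : ∀ q q', (∑ i, U i q * U i q') = if q = q' then 1 else 0)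
    (heig : ∀ q, A.mulVec (fun i => U i q) = lam q • fun i => U i q)
    (htop : ∀ (v : m → ℝ) (c : ℝ), v ≠ 0 → A.mulVec v = c • v →
      (∀ q, (∑ i, v i * U i q) = 0) → ∀ q, c ≤ lam q) :
    IsTopEigenfamily (toEuclideanCLM (𝕜 := ℝ) A) (fun q => WithLp.toLp 2 (U.col q)) lam where
  orthonormal := orthonormal_iff_ite.2 fun q q' => by
    simpa [EuclideanSpace.inner_eq_star_dotProduct, dotProduct, mul_comm] using horth q q'
  apply_eq_smul q := congrArg (WithLp.toLp 2) (heig q)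
  eigenvalue_le a v hv hav horth := by
    refine htop v.ofLp a ((WithLp.ofLp_eq_zero 2).not.2 hv) (congrArg WithLp.ofLp hav) fun q => ?_
    simpa [EuclideanSpace.inner_eq_star_dotProduct, dotProduct] using horth q

theorem abs_eDist_row_sub_le {n r d : ℕ} {ℬ : Fin n → Fin r}
    (hfib : ∀ q, (Finset.univ.filter fun i => ℬ i = q).card = d)
    {A : Matrix (Fin n) (Fin n) ℝ} (hA : A.IsHermitian)
    (hgap : 2 * specNorm (A - blockIndicator ℬ) < d) {U : Matrix (Fin n) (Fin r) ℝ}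
    {lam : Fin r → ℝ}
    (hU : IsTopEigenfamily (toEuclideanCLM (𝕜 := ℝ) A) (fun q => WithLp.toLp 2 (U.col q)) lam)
    (i j : Fin n) :
    |eDist (U i) (U j) - if ℬ i = ℬ j then 0 else √(2 / d)| ≤
      √2 * (specNorm (A - blockIndicator ℬ) / (d - specNorm (A - blockIndicator ℬ))) := by
  have hd : d ≠ 0 := by
    rintro rfl
    rw [specNorm_eq_norm_toEuclideanCLM, Nat.cast_zero] at hgap
    linarith [norm_nonneg (toEuclideanCLM (𝕜 := ℝ) (A - blockIndicator ℬ))]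
  obtain ⟨F, hrank, hF⟩ := exists_toEuclideanCLM_blockIndicator_eq hd hfib
  have hsymm : (toEuclideanCLM (𝕜 := ℝ) A : EuclideanSpace ℝ (Fin n) →ₗ[ℝ] _).IsSymmetric :=
    isSymmetric_toEuclideanLin_iff.2 hA
  rw [specNorm_eq_norm_toEuclideanCLM, map_sub, hF] at hgap ⊢
  have hDK := hU.norm_starProjection_sub_le (d := (d : ℝ)) hsymm hrank hgap
  set P := (span ℝ (Set.range fun q =>
    (WithLp.toLp 2 (U.col q) : EuclideanSpace ℝ (Fin n)))).starProjection
  set e : EuclideanSpace ℝ (Fin n) := EuclideanSpace.single i 1 - EuclideanSpace.single j 1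
  have hblock : ‖F.starProjection e‖ = if ℬ i = ℬ j then 0 else √(2 / d) := by
    rw [← Real.sqrt_sq (norm_nonneg _), norm_starProjection_single_sub_single_sq hd hF,
      apply_ite Real.sqrt, Real.sqrt_zero]
  rw [eDist_row_eq_norm_starProjection hU.orthonormal, ← hblock]
  calc |‖P e‖ - ‖F.starProjection e‖| ≤ ‖(P - F.starProjection) e‖ := abs_norm_sub_norm_le _ _
    _ ≤ ‖P - F.starProjection‖ * ‖e‖ := ContinuousLinearMap.le_opNorm _ _
    _ ≤ _ := by
      rw [mul_comm]
      gcongr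
      exacts [norm_single_sub_single_le i j, hDK]

end Rows

section Greedy

lemma eDist_comm {r : ℕ} (v w : Fin r → ℝ) : eDist v w = eDist w v := by
  rw [eDist_eq_norm, eDist_eq_norm, norm_sub_rev]

lemma eDist_triangle {r : ℕ} (v w x : Fin r → ℝ) : eDist v x ≤ eDist v w + eDist w x := by
  simp only [eDist_eq_norm]
  exact norm_sub_le_norm_sub_add_norm_sub _ _ _

lemma convex_setOf_eDist_le {r : ℕ} (p : Fin r → ℝ) (δ : ℝ) :
    Convex ℝ {x | eDist p x ≤ δ} := by
  simp only [eDist_comm p, eDist_eq_norm, ← dist_eq_norm]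
  exact (convex_closedBall (WithLp.toLp 2 p : EuclideanSpace ℝ (Fin r)) δ).linear_preimage
    (WithLp.linearEquiv 2 ℝ (Fin r → ℝ)).symm.toLinearMap

lemma inv_length_smul_sum_mem {𝕜 E α : Type*} [Field 𝕜] [LinearOrder 𝕜] [IsStrictOrderedRing 𝕜]
    [AddCommGroup E] [Module 𝕜 E] {s : Set E} (hs : Convex 𝕜 s) {l : List α} (hl : l ≠ [])
    {f : α → E} (hf : ∀ a ∈ l, f a ∈ s) : (l.length : 𝕜)⁻¹ • (l.map f).sum ∈ s := by
  have hlen : (l.length : 𝕜) ≠ 0 := by simpa using hl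
  rw [← Fin.sum_univ_fun_getElem, Finset.smul_sum]
  exact hs.sum_mem (fun _ _ => by positivity) (by simp [hlen]) fun i _ => hf _ (l.getElem_mem i.2)

/-- The number of clusters in use after the labels `l` have been assigned. -/
def numClusters (l : List ℕ) : ℕ := l.foldr (fun a b => max (a + 1) b) 0

lemma lt_numClusters {l : List ℕ} {a : ℕ} (ha : a ∈ l) : a < numClusters l := by
  induction l with
  | nil => simp at ha
  | cons b l ih =>
    rw [numClusters, List.foldr_cons, ← numClusters]
    rcases List.mem_cons.1 ha with rfl | h
    · omega
    · have := ih h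
      omega

lemma numClusters_append_singleton (l : List ℕ) (a : ℕ) :
    numClusters (l ++ [a]) = max (numClusters l) (a + 1) := by
  induction l with
  | nil => simp [numClusters]
  | cons b l ih =>
    simp only [numClusters, List.cons_append, List.foldr_cons] at ih ⊢
    rw [ih, max_assoc]

variable {r : ℕ} (u : ℕ → Fin r → ℝ) (t : ℝ)

/-- The mean of the points labelled `q` by `l`, where `l` labels `u 0, …, u (l.length - 1)`; it is
`0` when there is no such point. -/
noncomputable def centroid (l : List ℕ) (q : ℕ) : Fin r → ℝ :=
  let members := (List.range l.length).filter fun i => l.getD i 0 = q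
  (members.length : ℝ)⁻¹ • (members.map u).sum

/-- The label which one greedy step with threshold `t` gives to the point `u l.length`, when `l`
lists the labels of the points before it. -/
noncomputable def nextLabel (l : List ℕ) : ℕ :=
  match (List.range (numClusters l)).argmin fun q => eDist (u l.length) (centroid u l q) with
  | none => numClusters l
  | some best => if eDist (u l.length) (centroid u l best) < t then best else numClusters l

@[simp]
lemma length_greedyKMeans (j : ℕ) : (greedyKMeans r u t j).length = j := by
  induction j with
  | zero => rfl
  | succ j ih => simp [greedyKMeans, ih]

lemma greedyKMeans_succ (j : ℕ) :
    greedyKMeans r u t (j + 1) =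
      greedyKMeans r u t j ++ [nextLabel u t (greedyKMeans r u t j)] := by
  simp only [nextLabel, centroid, length_greedyKMeans]
  rfl

lemma nextLabel_cases (l : List ℕ) :
    (nextLabel u t l < numClusters l ∧
      eDist (u l.length) (centroid u l (nextLabel u t l)) < t) ∨
    (nextLabel u t l = numClusters l ∧
      ∀ q < numClusters l, t ≤ eDist (u l.length) (centroid u l q)) := by
  unfold nextLabel
  cases hmin : (List.range (numClusters l)).argmin fun q =>
    eDist (u l.length) (centroid u l q) with
  | none =>
    rw [List.argmin_eq_none, List.range_eq_nil] at hmin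
    exact .inr ⟨rfl, by simp [hmin]⟩
  | some best =>
    by_cases hlt : eDist (u l.length) (centroid u l best) < t
    · refine .inl ?_
      simpa [hlt] using List.argmin_mem hmin
    · refine .inr ⟨if_neg hlt, fun q hq => (not_lt.1 hlt).trans ?_⟩
      exact List.le_of_mem_argmin (f := fun q => eDist (u l.length) (centroid u l q))
        (List.mem_range.2 hq) hmin

/-- The labels `l` of the first `l.length` indices induce the same partition of these indices as
`b`, and all the clusters in use are nonempty. -/
structure IsExactLabelling {n : ℕ} {β : Type*} (b : Fin n → β) (l : List ℕ) : Prop where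
  exists_label_eq : ∀ q < numClusters l, ∃ i : Fin n, i < l.length ∧ l.getD i 0 = q
  label_eq_iff : ∀ i i' : Fin n, i < l.length → i' < l.length →
    (l.getD i 0 = l.getD i' 0 ↔ b i = b i')

namespace IsExactLabelling

variable {n : ℕ} {β : Type*} {b : Fin n → β} {l : List ℕ}

lemma append (h : IsExactLabelling b l) (hn : l.length < n) {a : ℕ} (ha : a ≤ numClusters l)
    (hab : ∀ i : Fin n, i < l.length → (l.getD i 0 = a ↔ b i = b ⟨l.length, hn⟩)) :
    IsExactLabelling b (l ++ [a]) := by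
  have hold {i : ℕ} (hi : i < l.length) : (l ++ [a]).getD i 0 = l.getD i 0 :=
    List.getD_append _ _ _ _ hi
  have hnew : (l ++ [a]).getD l.length 0 = a := by simp
  have hlt {i : Fin n} (hi : i < (l ++ [a]).length) : i < l.length ∨ i = ⟨l.length, hn⟩ := by
    rw [List.length_append, List.length_singleton, Nat.lt_succ_iff_lt_or_eq] at hi
    exact hi.imp_right Fin.ext
  constructor
  · intro q hq
    rw [numClusters_append_singleton] at hq
    rcases lt_or_ge q (numClusters l) with hql | hql
    · obtain ⟨i, hi, rfl⟩ := h.exists_label_eq q hql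
      exact ⟨i, by simp; omega, hold hi⟩
    · exact ⟨⟨l.length, hn⟩, by simp, hnew.trans (by omega)⟩
  · intro i i' hi hi'
    rcases hlt hi with hi | rfl <;> rcases hlt hi' with hi' | rfl
    · rw [hold hi, hold hi', h.label_eq_iff i i' hi hi']
    · rw [hold hi, hnew, hab i hi]
    · rw [hold hi', hnew, eq_comm, hab i' hi', eq_comm]
    · simp only

variable {u t} {δ : ℝ}

lemma eDist_centroid_le (h : IsExactLabelling b l) (hn : l.length ≤ n) {i : Fin n}
    (hi : i < l.length) {p : Fin r → ℝ} (hp : ∀ k, b k = b i → eDist p (u k) ≤ δ) :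
    eDist p (centroid u l (l.getD i 0)) ≤ δ := by
  refine inv_length_smul_sum_mem (convex_setOf_eDist_le p δ) ?_ fun k hk => ?_
  · exact List.ne_nil_of_mem (a := ↑i) (by simp [hi])
  · simp only [List.mem_filter, List.mem_range, decide_eq_true_eq] at hk
    exact hp ⟨k, hk.1.trans_le hn⟩ ((h.label_eq_iff _ i hk.1 hi).1 hk.2)

lemma eq_of_eDist_centroid_lt (hsame : ∀ i i', b i = b i' → eDist (u i) (u i') ≤ δ)
    (hdiff : ∀ i i', b i ≠ b i' → t + δ ≤ eDist (u i) (u i')) (h : IsExactLabelling b l)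
    (hn : l.length ≤ n) {i j : Fin n} (hi : i < l.length)
    (hlt : eDist (u j) (centroid u l (l.getD i 0)) < t) : b i = b j := by
  by_contra hne
  have hcentroid := h.eDist_centroid_le hn hi fun k hk => hsame i k hk.symm
  have htriangle := eDist_triangle (u j) (centroid u l (l.getD i 0)) (u i)
  rw [eDist_comm (centroid _ _ _)] at htriangle
  linarith [hdiff j i (Ne.symm hne)]

lemma label_eq_nextLabel_iff (hsame : ∀ i i', b i = b i' → eDist (u i) (u i') ≤ δ)
    (hdiff : ∀ i i', b i ≠ b i' → t + δ ≤ eDist (u i) (u i')) (hδ : δ < t)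
    (h : IsExactLabelling b l) (hn : l.length < n) {i : Fin n} (hi : i < l.length) :
    l.getD i 0 = nextLabel u t l ↔ b i = b ⟨l.length, hn⟩ := by
  have hlt : l.getD i 0 < numClusters l := lt_numClusters (by simp [hi])
  constructor
  · intro heq
    rcases nextLabel_cases u t l with ⟨-, hnear⟩ | ⟨hnew, -⟩
    · rw [← heq] at hnear
      exact h.eq_of_eDist_centroid_lt hsame hdiff hn.le (j := ⟨l.length, hn⟩) hi hnear
    · omega
  · intro hb
    have hnear : eDist (u l.length) (centroid u l (l.getD i 0)) ≤ δ :=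
      h.eDist_centroid_le hn.le hi fun k hk => hsame ⟨l.length, hn⟩ k (hk.trans hb).symm
    rcases nextLabel_cases u t l with ⟨hold, hlabel⟩ | ⟨-, hfar⟩
    · obtain ⟨i', hi', heq⟩ := h.exists_label_eq _ hold
      rw [← heq] at hlabel ⊢
      have hb' := h.eq_of_eDist_centroid_lt hsame hdiff hn.le (j := ⟨l.length, hn⟩) hi' hlabel
      exact (h.label_eq_iff i i' hi hi').2 (hb.trans hb'.symm)
    · linarith [hfar _ hlt]

end IsExactLabelling

theorem isExactLabelling_greedyKMeans {n : ℕ} {β : Type*} {b : Fin n → β} {u : ℕ → Fin r → ℝ}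
    {t δ : ℝ} (hsame : ∀ i i', b i = b i' → eDist (u i) (u i') ≤ δ)
    (hdiff : ∀ i i', b i ≠ b i' → t + δ ≤ eDist (u i) (u i')) (hδ : δ < t) {j : ℕ} (hj : j ≤ n) :
    IsExactLabelling b (greedyKMeans r u t j) := by
  induction j with
  | zero => constructor <;> simp [greedyKMeans, numClusters]
  | succ j ih =>
    have hlen : (greedyKMeans r u t j).length < n := by simpa using hj
    have h := ih (by omega)
    rw [greedyKMeans_succ]
    refine h.append hlen ?_ fun i hi => h.label_eq_nextLabel_iff hsame hdiff hδ hlen hi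
    rcases nextLabel_cases u t (greedyKMeans r u t j) with ⟨hold, -⟩ | ⟨hnew, -⟩
    exacts [hold.le, hnew.le]

end Greedy

lemma one_div_sqrt_two_mul_mem_Ioc {d ε : ℝ} (hd : 1 ≤ d) (hε : ε < √(2 * d) / 8) :
    2 * ε < d ∧ 1 / √(2 * d) ∈
      Set.Ioc (√2 * (ε / (d - ε))) (√(2 / d) - 2 * (√2 * (ε / (d - ε)))) := by
  obtain ⟨s, hs⟩ : ∃ s, √(2 * d) = s := ⟨_, rfl⟩
  rw [hs] at hε ⊢
  have hs0 : 0 < s := hs ▸ Real.sqrt_pos.2 (by linarith)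
  have hss : s ^ 2 = 2 * d := hs ▸ Real.sq_sqrt (by linarith)
  have hsd : s ≤ 2 * d := by nlinarith
  have hgap : 0 < d - ε := by linarith
  have hsqrt : √(2 / d) = 2 / s := by
    rw [Real.sqrt_eq_iff_mul_self_eq_of_pos (by positivity)]
    field_simp
    linarith
  have hσ : √2 * (ε / (d - ε)) ≤ 1 / (2 * s) := by
    have h2 : √2 ≤ 3 / 2 := Real.sqrt_le_iff.2 (by norm_num)
    rw [← mul_div_assoc, div_le_div_iff₀ hgap (by positivity), one_mul]
    calc √2 * ε * (2 * s) = √2 * (2 * (ε * s)) := by ring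
      _ ≤ √2 * (2 * (s / 8 * s)) := by gcongr
      _ = √2 * (d / 2) := by linear_combination (√2 / 4) * hss
      _ ≤ 3 / 2 * (d / 2) := by gcongr
      _ ≤ d - ε := by linarith
  have hhalf : 1 / (2 * s) = 1 / s / 2 := by ring
  have htwo : 2 / s = 2 * (1 / s) := by ring
  have hpos : 0 < 1 / s := by positivity
  rw [hsqrt, Set.mem_Ioc]
  refine ⟨by linarith, by linarith, by linarith⟩

theorem exact_clustering_general {n r d : ℕ} (ℬ : Fin n → Fin r)
    (hfib : ∀ q, (Finset.univ.filter fun i => ℬ i = q).card = d)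
    (Bt : Matrix (Fin n) (Fin n) ℝ) (hsym : Bt.IsHermitian) {ε : ℝ}
    (hε : specNorm (Bt - blockIndicator ℬ) = ε) (hgap : 2 * ε < d)
    (U : Matrix (Fin n) (Fin r) ℝ) (lam : Fin r → ℝ)
    (hU : IsTopEigenfamily (toEuclideanCLM (𝕜 := ℝ) Bt) (fun q => WithLp.toLp 2 (U.col q)) lam)
    {t : ℝ} (ht : t ∈ Set.Ioc (√2 * (ε / (d - ε))) (√(2 / d) - 2 * (√2 * (ε / (d - ε)))))
    (u : ℕ → Fin r → ℝ) (hu : ∀ i : Fin n, u i = U i) (i j : Fin n) :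
    (greedyKMeans r u t n).getD i 0 = (greedyKMeans r u t n).getD j 0 ↔ ℬ i = ℬ j := by
  subst hε
  have hrow (i j : Fin n) := abs_sub_le_iff.1 (abs_eDist_row_sub_le hfib hsym hgap hU i j)
  simp only [← hu] at hrow
  have hexact : IsExactLabelling ℬ (greedyKMeans r u t n) := by
    refine isExactLabelling_greedyKMeans (fun i j hij => ?_) (fun i j hij => ?_) ht.1 le_rfl
    · simpa [hij] using (hrow i j).1
    · have := (hrow i j).2
      rw [if_neg hij] at this
      linarith [ht.2]
  exact hexact.label_eq_iff i j (by simp) (by simp)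

/-- Proposition 4, exact clustering: if `ℬ` is a block structure with `r`
blocks of equal size `d ≥ 2`, `B` its indicator matrix, `Bt` a symmetric matrix with
`‖Bt − B‖₂ < √(2d)/8`, and the columns of `U` form an orthonormal family of eigenvectors
of `Bt` for its `r` largest eigenvalues (counted with multiplicity), then the greedy
K-means procedure with threshold `1/√(2d)` applied to the rows of `U` outputs a labeling
inducing exactly the partition of `{1,…,n}` given by `ℬ`. -/
theorem exact_clustering
    {n r d : ℕ} (hd : 2 ≤ d) (hn : n = r * d)
    (ℬ : Fin n → Fin r)
    (hfib : ∀ q, (Finset.univ.filter fun i => ℬ i = q).card = d)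
    (B : Matrix (Fin n) (Fin n) ℝ)
    (hB : B = Matrix.of fun i j => if ℬ i = ℬ j then 1 else 0)
    (Bt : Matrix (Fin n) (Fin n) ℝ) (hsym : Bt.IsHermitian)
    (hclose : specNorm (Bt - B) < Real.sqrt (2 * d) / 8)
    (U : Matrix (Fin n) (Fin r) ℝ)
    -- the columns of U are orthonormal
    (horth : ∀ q q', (∑ i, U i q * U i q') = if q = q' then 1 else 0)
    -- the columns of U are eigenvectors of Bt for its r largest eigenvalues
    (lam : Fin r → ℝ)
    (heig : ∀ q, Bt.mulVec (fun i => U i q) = lam q • fun i => U i q)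
    (htop : ∀ (v : Fin n → ℝ) (c : ℝ), v ≠ 0 → Bt.mulVec v = c • v →
      (∀ q, (∑ i, v i * U i q) = 0) → ∀ q, c ≤ lam q)
    -- the stream of points fed to the greedy K-means: the rows of U
    (u : ℕ → Fin r → ℝ)
    (hu : ∀ i : ℕ, ∀ h : i < n, u i = fun q => U ⟨i, h⟩ q)
    (labels : List ℕ)
    (hlabels : labels = greedyKMeans r u (1 / Real.sqrt (2 * d)) n) :
    ∀ i j : Fin n, (labels.getD i 0 = labels.getD j 0 ↔ ℬ i = ℬ j) := by
  subst hB hlabels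
  obtain ⟨hgap, ht⟩ :=
    one_div_sqrt_two_mul_mem_Ioc (by exact_mod_cast one_le_two.trans hd) hclose
  exact exact_clustering_general ℬ hfib Bt hsym rfl hgap U lam
    (isTopEigenfamily_col horth heig htop) ht u fun i => hu i i.2
end

section
/- Let n, m, d be positive integers, μ, ν, γ > 0, 0 < p ≤ 1/2. Let P ∈ ℝ^{n×n} be an invertible symmetric matrix with ‖P⁻¹‖₂ ≤ ν, let B, E, C ∈ ℝ^{n×n} with ‖E − γ·I_n‖₂ ≤ max{1/m², n/m⁴}·d·√n·log(n)·μ⁸, let Σ = p(1−p)·P B P + 2p·E + C, and let Σ̂ ∈ ℝ^{n×n} be arbitrary. Define B̂ = (1/(p(1−p)))·P⁻¹ (Σ̂ − 2pγ·I_n − C) P⁻¹. Then ‖B̂ − B‖₂ ≤ ν²·( (2/p)·‖Σ̂ − Σ‖₂ + 4·max{1/m², n/m⁴}·d·√n·log(n)·μ⁸ ). -/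
open Matrix

/-!
The map sending a covariance to the estimate of `B` is affine, and it would send `Σ` to `B` if
`E` were exactly `γ • 1`. The estimation error is therefore the image, under the linear map
`X ↦ (p (1 - p))⁻¹ • (P⁻¹ X P⁻¹)`, of the sampling error `Σ̂ - Σ` plus the model error
`2p • (E - γ • 1)`, and submultiplicativity of the norm bounds it.
-/

section Algebra

variable {𝕜 𝔸 : Type*} [Field 𝕜] [Ring 𝔸] [Algebra 𝕜 𝔸]

/-- The decomposition `Σ = p(1 - p) PBP + 2pE + C` of the fourth-moment covariance of the channel
output, with the matrices replaced by elements of an arbitrary algebra. -/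
def blockCovariance (p : 𝕜) (P B E C : 𝔸) : 𝔸 :=
  (p * (1 - p)) • (P * B * P) + (2 * p) • E + C

/-- The eavesdropper's estimate `B̂` of the block indicator `B` from an empirical covariance `S`,
obtained by solving the decomposition of the covariance for `B` with `γ • 1` in place of `E`.
The invertible matrix `P` becomes a unit, so that `P⁻¹` is a genuine inverse. -/
def blockEstimator (p γ : 𝕜) (P : 𝔸ˣ) (C S : 𝔸) : 𝔸 :=
  (1 / (p * (1 - p))) • (↑P⁻¹ * (S - (2 * p * γ) • 1 - C) * ↑P⁻¹)

lemma blockEstimator_sub {p : 𝕜} (hp : p * (1 - p) ≠ 0) (γ : 𝕜) (P : 𝔸ˣ) (B E C S : 𝔸) :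
    blockEstimator p γ P C S - B = (1 / (p * (1 - p))) •
      (↑P⁻¹ * (S - blockCovariance p ↑P B E C + (2 * p) • (E - γ • 1)) * ↑P⁻¹) := by
  have conj_cancel : (↑P⁻¹ : 𝔸) * (P * B * P) * ↑P⁻¹ = B := by
    simp only [mul_assoc, Units.mul_inv, mul_one, Units.inv_mul_cancel_left]
  have regroup : S - blockCovariance p ↑P B E C + (2 * p) • (E - γ • 1) =
      S - (2 * p * γ) • 1 - C - (p * (1 - p)) • (P * B * P) := by
    rw [blockCovariance, smul_sub, smul_smul]
    abel
  rw [regroup, mul_sub (↑P⁻¹ : 𝔸), sub_mul _ _ (↑P⁻¹ : 𝔸), smul_sub, mul_smul_comm,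
    smul_mul_assoc, conj_cancel, smul_smul, one_div_mul_cancel hp, one_smul, blockEstimator]

end Algebra

section Norm

variable {𝔸 : Type*} [SeminormedRing 𝔸] [NormedAlgebra ℝ 𝔸]

lemma norm_blockEstimator_sub_le {p : ℝ} (hp0 : 0 < p) (hp1 : p < 1) (γ : ℝ) (P : 𝔸ˣ)
    (B E C S : 𝔸) :
    ‖blockEstimator p γ P C S - B‖ ≤ ‖(↑P⁻¹ : 𝔸)‖ ^ 2 *
      (1 / (p * (1 - p)) * (‖S - blockCovariance p ↑P B E C‖ + 2 * p * ‖E - γ • (1 : 𝔸)‖)) := by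
  have hpp : 0 < p * (1 - p) := mul_pos hp0 (sub_pos.mpr hp1)
  set Δ : 𝔸 := S - blockCovariance p ↑P B E C
  set R : 𝔸 := E - γ • 1
  calc ‖blockEstimator p γ P C S - B‖
      = 1 / (p * (1 - p)) * ‖(↑P⁻¹ : 𝔸) * (Δ + (2 * p) • R) * ↑P⁻¹‖ := by
        rw [blockEstimator_sub hpp.ne' γ P B E C S, norm_smul_of_nonneg (one_div_pos.mpr hpp).le]
    _ ≤ 1 / (p * (1 - p)) * (‖(↑P⁻¹ : 𝔸)‖ * ‖Δ + (2 * p) • R‖ * ‖(↑P⁻¹ : 𝔸)‖) := by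
        gcongr
        exact norm_mul₃_le
    _ ≤ 1 / (p * (1 - p)) * (‖(↑P⁻¹ : 𝔸)‖ * (‖Δ‖ + 2 * p * ‖R‖) * ‖(↑P⁻¹ : 𝔸)‖) := by
        gcongr
        exact norm_add_le_of_le le_rfl (norm_smul_of_nonneg (by positivity) R).le
    _ = ‖(↑P⁻¹ : 𝔸)‖ ^ 2 * (1 / (p * (1 - p)) * (‖Δ‖ + 2 * p * ‖R‖)) := by ring

theorem finite_snapshot_bound_general {p : ℝ} (hp0 : 0 < p) (hp1 : p ≤ 1 / 2) {γ ν η : ℝ}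
    (P : 𝔸ˣ) (hP : ‖(↑P⁻¹ : 𝔸)‖ ≤ ν) (B : 𝔸) {E : 𝔸} (hE : ‖E - γ • (1 : 𝔸)‖ ≤ η) (C S : 𝔸) :
    ‖blockEstimator p γ P C S - B‖ ≤
      ν ^ 2 * (2 / p * ‖S - blockCovariance p ↑P B E C‖ + 4 * η) := by
  have hpp : 0 < p * (1 - p) := mul_pos hp0 (by linarith)
  have inv_le : 1 / (p * (1 - p)) ≤ 2 / p := by
    rw [div_le_div_iff₀ hpp hp0]
    nlinarith
  calc ‖blockEstimator p γ P C S - B‖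
      ≤ ‖(↑P⁻¹ : 𝔸)‖ ^ 2 * (1 / (p * (1 - p)) *
          (‖S - blockCovariance p ↑P B E C‖ + 2 * p * ‖E - γ • (1 : 𝔸)‖)) :=
        norm_blockEstimator_sub_le hp0 (by linarith) γ P B E C S
    _ ≤ ν ^ 2 * (2 / p * (‖S - blockCovariance p ↑P B E C‖ + 2 * p * η)) := by gcongr
    _ = ν ^ 2 * (2 / p * ‖S - blockCovariance p ↑P B E C‖ + 4 * η) := by
        field_simp
        ring

end Norm

open scoped Matrix.Norms.L2Operator in
lemma specNorm_eq_norm {m n : ℕ} (A : Matrix (Fin m) (Fin n) ℝ) : specNorm A = ‖A‖ :=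
  rfl

/-- deterministic finite-snapshot estimation bound.  If
`Σ = p(1−p)·PBP + 2p·E + C` and `B̂ = (1/(p(1−p)))·P⁻¹(Σ̂ − 2pγI − C)P⁻¹`, then
`‖B̂ − B‖₂ ≤ ν²((2/p)‖Σ̂ − Σ‖₂ + 4·max{1/m², n/m⁴}·d·√n·log(n)·μ⁸)`. -/
theorem finite_snapshot_bound
    {n m d : ℕ} (hn : 0 < n) (hm : 0 < m) (hd : 0 < d)
    (μ ν γ : ℝ) (hμ : 0 < μ) (hν : 0 < ν) (hγ : 0 < γ)
    (p : ℝ) (hp0 : 0 < p) (hp1 : p ≤ 1 / 2)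
    (P : Matrix (Fin n) (Fin n) ℝ) (hPsym : P.IsHermitian) (hPinv : IsUnit P.det)
    (hPnorm : specNorm P⁻¹ ≤ ν)
    (B E C S Shat : Matrix (Fin n) (Fin n) ℝ)
    (hE : specNorm (E - γ • (1 : Matrix (Fin n) (Fin n) ℝ))
      ≤ max (1 / (m : ℝ) ^ 2) ((n : ℝ) / (m : ℝ) ^ 4) * d * Real.sqrt n * Real.log n * μ ^ 8)
    (hS : S = (p * (1 - p)) • (P * B * P) + (2 * p) • E + C)
    (Bhat : Matrix (Fin n) (Fin n) ℝ)
    (hBhat : Bhat = (1 / (p * (1 - p)))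
        • (P⁻¹ * (Shat - (2 * p * γ) • (1 : Matrix (Fin n) (Fin n) ℝ) - C) * P⁻¹)) :
    specNorm (Bhat - B)
      ≤ ν ^ 2 * ((2 / p) * specNorm (Shat - S)
        + 4 * max (1 / (m : ℝ) ^ 2) ((n : ℝ) / (m : ℝ) ^ 4) * d * Real.sqrt n
          * Real.log n * μ ^ 8) := by
  subst hS hBhat
  lift P to (Matrix (Fin n) (Fin n) ℝ)ˣ using P.isUnit_iff_isUnit_det.mpr hPinv
  simp only [← coe_units_inv, specNorm_eq_norm] at hPnorm hE ⊢
  open scoped Matrix.Norms.L2Operator in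
  simpa only [blockCovariance, blockEstimator, mul_assoc] using
    finite_snapshot_bound_general hp0 hp1 P hPnorm B hE C Shat
end
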